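/- Let Cl be the Clifford algebra of the quadratic form Q(v) = −‖v‖² on the Euclidean space ℝᵖ × ℝ^q (with the product inner product), with canonical map ι; let (e₁, …, e_p) and (f₁, …, f_q) be the standard orthonormal bases of the two factors. Let u : ℝᵖ → ℝ^q be linear with adjoint u* : ℝ^q → ℝᵖ (⟨u(x), y⟩ = ⟨x, u*(y)⟩). Set underline(u) := ½ Σ_{j=1}^p ι(e_j, 0)·ι(0, u(e_j)) ∈ Cl. Then for every ξ = (ξ_p, ξ_q) ∈ ℝᵖ × ℝ^q, the commutator satisfies underline(u)·ι(ξ) − ι(ξ)·underline(u) = ι(−u*(ξ_q), u(ξ_p)); i.e. underline(u) represents the skew-symmetric operator with block form (0, −u*; u, 0). -/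

import Mathlib

/-- The quadratic form `Q(v) = −‖v‖²` on the Euclidean space `ℝᵖ × ℝ^q`
(product inner product). -/
noncomputable def QnegProd (p q : ℕ) : QuadraticForm ℝ ((Fin p → ℝ) × (Fin q → ℝ)) :=
  (QuadraticMap.weightedSumSquares ℝ (fun _ : Fin p => (-1 : ℝ))).prod
    (QuadraticMap.weightedSumSquares ℝ (fun _ : Fin q => (-1 : ℝ)))

/-!
In the Lie algebra of commutators of a Clifford algebra, a product `ι a * ι b` acts on vectors by
`ι x ↦ polar Q b x • ι a - polar Q a x • ι b`: move `ι x` across the two factors, one at a time.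
Summing over `a = (e j, 0)` and `b = (0, u (e j))` produces `∑ j, polar Q₂ (u (e j)) y • e j` in the
first factor and `-∑ j, polar Q₁ (e j) x • u (e j)` in the second. After the adjoint has moved `u`
to the other side in the first sum, both are expansions of a vector in the family `e`.
-/

open CliffordAlgebra QuadraticMap

section CliffordAlgebra

variable {R M₁ M₂ κ : Type*} [CommRing R] [AddCommGroup M₁] [Module R M₁]
  [AddCommGroup M₂] [Module R M₂] [Fintype κ]

theorem lie_ι_mul_ι_ι (Q : QuadraticForm R M₁) (a b x : M₁) :
    ⁅ι Q a * ι Q b, ι Q x⁆ = ι Q (polar Q b x • a - polar Q a x • b) := by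
  calc ⁅ι Q a * ι Q b, ι Q x⁆
      = ι Q a * (ι Q b * ι Q x + ι Q x * ι Q b) - (ι Q a * ι Q x + ι Q x * ι Q a) * ι Q b := by
        rw [Ring.lie_def]
        noncomm_ring
    _ = ι Q (polar Q b x • a - polar Q a x • b) := by
        rw [ι_mul_ι_add_swap, ι_mul_ι_add_swap, ← Algebra.commutes, ← Algebra.smul_def,
          ← Algebra.smul_def, map_sub, map_smul, map_smul]

theorem lie_ι_inl_mul_ι_inr_ι (Q₁ : QuadraticForm R M₁) (Q₂ : QuadraticForm R M₂)
    (a : M₁) (b : M₂) (ξ : M₁ × M₂) :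
    ⁅ι (Q₁.prod Q₂) (a, 0) * ι (Q₁.prod Q₂) (0, b), ι (Q₁.prod Q₂) ξ⁆ =
      ι (Q₁.prod Q₂) (polar Q₂ b ξ.2 • a, -(polar Q₁ a ξ.1 • b)) := by
  rw [lie_ι_mul_ι_ι]
  simp

/-- The family `e` plays the role of an orthonormal basis and `r` that of the normalising factor
`1 / 2`; the sign in `he` is that of a negative definite form, for which `polar Q₁ x y` is
`-2 * ⟪x, y⟫`. -/
theorem bivector_represents_block_skew_general
    {Q₁ : QuadraticForm R M₁} {Q₂ : QuadraticForm R M₂} {e : κ → M₁} {r : R}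
    (he : ∀ x, r • ∑ j, polar Q₁ (e j) x • e j = -x) {u : M₁ →ₗ[R] M₂} {uadj : M₂ → M₁}
    (hadj : LinearMap.IsAdjointPair Q₁.polarBilin Q₂.polarBilin u uadj) (ξ : M₁ × M₂) :
    ⁅r • ∑ j, ι (Q₁.prod Q₂) (e j, 0) * ι (Q₁.prod Q₂) (0, u (e j)), ι (Q₁.prod Q₂) ξ⁆ =
      ι (Q₁.prod Q₂) (-uadj ξ.2, u ξ.1) := by
  have h_polar (x : M₁) (y : M₂) : polar Q₂ (u x) y = polar Q₁ x (uadj y) := hadj x y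
  have h_fst : r • ∑ j, polar Q₂ (u (e j)) ξ.2 • e j = -uadj ξ.2 := by
    simp only [h_polar, he]
  have h_snd : r • ∑ j, -(polar Q₁ (e j) ξ.1 • u (e j)) = u ξ.1 := by
    simpa [neg_eq_iff_eq_neg] using congrArg u (he ξ.1)
  rw [Ring.lie_def, smul_mul_assoc, mul_smul_comm, ← smul_sub, Finset.sum_mul, Finset.mul_sum,
    ← Finset.sum_sub_distrib]
  simp only [← Ring.lie_def, lie_ι_inl_mul_ι_inr_ι]
  rw [← map_sum, ← map_smul, ← prod_mk_sum, Prod.smul_mk, h_fst, h_snd]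

end CliffordAlgebra

section WeightedSumSquares

variable {R κ : Type*} [CommRing R] [Fintype κ]

theorem polar_weightedSumSquares (w x y : κ → R) :
    polar (weightedSumSquares R w) x y = ∑ i, 2 * w i * (x i * y i) := by
  simp only [polar, weightedSumSquares_apply, Pi.add_apply, smul_eq_mul, ← Finset.sum_sub_distrib]
  exact Finset.sum_congr rfl fun i _ => by ring

theorem sum_polar_weightedSumSquares_single_smul_single [DecidableEq κ] (w x : κ → R) :
    ∑ j, polar (weightedSumSquares R w) (Pi.single j 1) x • (Pi.single j 1 : κ → R) =
      fun j => 2 * w j * x j := by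
  ext i
  simp [polar_weightedSumSquares, Pi.single_apply]

end WeightedSumSquares

/-- For a linear map `u : ℝᵖ → ℝ^q` with adjoint `u*`, the element
`underline(u) = ½ Σ_j ι(e_j, 0)·ι(0, u(e_j))` of the Clifford algebra of `Q(v) = −‖v‖²`
on `ℝᵖ × ℝ^q` represents the skew-symmetric operator `(ξ_p, ξ_q) ↦ (−u*(ξ_q), u(ξ_p))`:
`[underline(u), ι(ξ)] = ι(−u*(ξ_q), u(ξ_p))`. -/
theorem bivector_represents_block_skew (p q : ℕ)
    (u : (Fin p → ℝ) →ₗ[ℝ] (Fin q → ℝ)) (ustar : (Fin q → ℝ) →ₗ[ℝ] (Fin p → ℝ))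
    (hadj : ∀ (x : Fin p → ℝ) (y : Fin q → ℝ), ∑ i, u x i * y i = ∑ j, x j * ustar y j)
    (ξ : (Fin p → ℝ) × (Fin q → ℝ)) :
    ((1 / 2 : ℝ) • ∑ j, CliffordAlgebra.ι (QnegProd p q) (Pi.single j 1, 0) *
        CliffordAlgebra.ι (QnegProd p q) (0, u (Pi.single j 1))) *
        CliffordAlgebra.ι (QnegProd p q) ξ -
      CliffordAlgebra.ι (QnegProd p q) ξ *
        ((1 / 2 : ℝ) • ∑ j, CliffordAlgebra.ι (QnegProd p q) (Pi.single j 1, 0) *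
          CliffordAlgebra.ι (QnegProd p q) (0, u (Pi.single j 1))) =
    CliffordAlgebra.ι (QnegProd p q) (-(ustar ξ.2), u ξ.1) := by
  refine bivector_represents_block_skew_general (fun x => ?_) (fun x y => ?_) ξ
  · rw [sum_polar_weightedSumSquares_single_smul_single]
    ext j
    simp
  · simp only [polarBilin_apply_apply, polar_weightedSumSquares, ← Finset.mul_sum, hadj]
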